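/- Let L and S be positive integers with S ≤ L, let γ ∈ (0,1) be the positive root of Lγ + Sγ² = 1, and let (ξ^j)_{j≥1} be the (L,S)-sequence of points. For each N, let P_{L,S}(N) = { ((n−1)/N, ξⁿ) : n = 1, …, N } be the (L,S)-point set à la van der Corput of order N. Then there exists a constant C₁ > 0 such that for every integer N ≥ 2 one has N · D₂(P_{L,S}(N)) ≤ C₁ · log N. -/

import Mathlib

open Finset Real

noncomputable section

/-- The `k`-th digit of `n` in base `b`. -/
def lsDigit (b n k : ℕ) : ℕ := n / b ^ k % b

/-- Membership in the set `N_{L,S}`: for every `k`, the pair of consecutive digits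
`(a_k(n), a_{k+1}(n))` in base `L+S` does not lie in
`{L,…,L+S−1} × {1,…,L+S−1}`. -/
def memNLS (L S n : ℕ) : Prop :=
  ∀ k : ℕ, ¬ (L ≤ lsDigit (L + S) n k ∧ lsDigit (L + S) n k ≤ L + S - 1 ∧
      1 ≤ lsDigit (L + S) n (k + 1) ∧ lsDigit (L + S) n (k + 1) ≤ L + S - 1)

/-- The modified digit `ã`: `ã = a` if `a ≤ L−1`, and `ã = L + γ(a−L)` if `L ≤ a`. -/
def lsTilde (L : ℕ) (γ : ℝ) (a : ℕ) : ℝ :=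
  if a < L then (a : ℝ) else (L : ℝ) + γ * ((a : ℝ) - (L : ℝ))

/-- The radical-inverse-type function `φ_{L,S}(n) = Σ_{k=0}^{M} ã_k(n) γ^{k+1}`,
with `M = ⌊log_{L+S} n⌋`. -/
def lsPhi (L S : ℕ) (γ : ℝ) (n : ℕ) : ℝ :=
  ∑ k ∈ Finset.range (Nat.log (L + S) n + 1),
    lsTilde L γ (lsDigit (L + S) n k) * γ ^ (k + 1)

/-- The `(L,S)`-sequence of points: `ξ^j = φ_{L,S}(n_j)` where `n_1 < n_2 < ⋯`
is the increasing enumeration of `N_{L,S}` (so `n_j = Nat.nth (memNLS L S) (j-1)`). -/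
def lsSeq (L S : ℕ) (γ : ℝ) (j : ℕ) : ℝ :=
  lsPhi L S γ (Nat.nth (memNLS L S) (j - 1))

/-- One-dimensional discrepancy of the first `N` terms `x 1, …, x N` of a sequence:
`sup_{0 ≤ a < b ≤ 1} |(1/N) Σ_{j=1}^N χ_{[a,b)}(x j) − (b−a)|`. -/
def discrep (x : ℕ → ℝ) (N : ℕ) : ℝ :=
  ⨆ p : {p : ℝ × ℝ // 0 ≤ p.1 ∧ p.1 < p.2 ∧ p.2 ≤ 1},
    |(∑ j ∈ Finset.Icc 1 N,
        Set.indicator (Set.Ico p.1.1 p.1.2) (fun _ => (1 : ℝ)) (x j)) / N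
      - (p.1.2 - p.1.1)|

/-- Two-dimensional (star) discrepancy of the first `N` terms of a sequence of points
in the unit square:
`sup_{0 < a ≤ 1, 0 < b ≤ 1} |(1/N) Σ_{j=1}^N χ_{[0,a)×[0,b)}(x j) − ab|`. -/
def discrep2 (x : ℕ → ℝ × ℝ) (N : ℕ) : ℝ :=
  ⨆ p : {p : ℝ × ℝ // 0 < p.1 ∧ p.1 ≤ 1 ∧ 0 < p.2 ∧ p.2 ≤ 1},
    |(∑ j ∈ Finset.Icc 1 N,
        Set.indicator (Set.Ico (0 : ℝ) p.1.1) (fun _ => (1 : ℝ)) (x j).1 *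
        Set.indicator (Set.Ico (0 : ℝ) p.1.2) (fun _ => (1 : ℝ)) (x j).2) / N
      - p.1.1 * p.1.2|

/-! ### Recursive structure of the admissible integers and of `lsPhi` -/

lemma lsDigit_succ (b n k : ℕ) : lsDigit b n (k + 1) = lsDigit b (n / b) k := by
  simp [lsDigit, pow_succ', Nat.div_div_eq_div_mul]

lemma lsDigit_zero_right (b n : ℕ) : lsDigit b n 0 = n % b := by
  simp [lsDigit]

lemma memNLS_iff {L S : ℕ} (hS : 0 < S) (n : ℕ) :
    memNLS L S n ↔
      ¬ (L ≤ n % (L + S) ∧ n / (L + S) % (L + S) ≠ 0) ∧ memNLS L S (n / (L + S)) := by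
  have hlt : ∀ m k, lsDigit (L + S) m k ≤ L + S - 1 := fun m k => by
    have := Nat.mod_lt (m / (L + S) ^ k) (show 0 < L + S by omega)
    unfold lsDigit
    omega
  unfold memNLS
  constructor
  · intro h
    refine ⟨fun hn => h 0 ?_, fun k hk => h (k + 1) ?_⟩
    · refine ⟨by simpa [lsDigit_zero_right] using hn.1, hlt _ _, ?_, hlt _ _⟩
      rw [lsDigit_succ, lsDigit_zero_right]
      exact Nat.one_le_iff_ne_zero.2 hn.2
    · simpa only [lsDigit_succ] using hk
  · rintro ⟨h0, h⟩ k hk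
    cases k with
    | zero =>
      refine h0 ⟨by simpa [lsDigit_zero_right] using hk.1, ?_⟩
      have := hk.2.2.1
      rw [lsDigit_succ, lsDigit_zero_right] at this
      exact Nat.one_le_iff_ne_zero.1 this
    | succ k => exact h k (by simpa only [lsDigit_succ] using hk)

lemma memNLS_mul_add_of_lt {L S d : ℕ} (hS : 0 < S) (hd : d < L) (q : ℕ) :
    memNLS L S ((L + S) * q + d) ↔ memNLS L S q := by
  have hb : 0 < L + S := by omega
  rw [memNLS_iff hS, Nat.mul_add_mod, Nat.mod_eq_of_lt (by omega), Nat.mul_add_div hb,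
    Nat.div_eq_of_lt (by omega)]
  simp [hd]

lemma memNLS_mul_add_of_le {L S e : ℕ} (hS : 0 < S) (he : e < S) (q : ℕ) :
    memNLS L S ((L + S) * q + (L + e)) ↔ q % (L + S) = 0 ∧ memNLS L S q := by
  have hb : 0 < L + S := by omega
  rw [memNLS_iff hS, Nat.mul_add_mod, Nat.mod_eq_of_lt (by omega), Nat.mul_add_div hb,
    Nat.div_eq_of_lt (by omega)]
  simp

lemma memNLS_zero (L S : ℕ) : memNLS L S 0 := by
  intro k
  simp [lsDigit]

lemma memNLS_one {L S : ℕ} (hL : 0 < L) (hS : 0 < S) : memNLS L S 1 := by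
  have h1 : 1 / (L + S) = 0 := Nat.div_eq_of_lt (by omega)
  rw [memNLS_iff hS, h1]
  simp [memNLS_zero]

lemma infinite_memNLS {L S : ℕ} (hL : 0 < L) (hS : 0 < S) : {n | memNLS L S n}.Infinite := by
  refine Set.infinite_of_injective_forall_mem
    (Nat.pow_right_injective (show 2 ≤ L + S by omega)) fun k => ?_
  induction k with
  | zero => simpa using memNLS_one hL hS
  | succ k ih => simpa [pow_succ'] using (memNLS_mul_add_of_lt hS hL _).2 ih

lemma lsTilde_zero {L : ℕ} (hL : 0 < L) (γ : ℝ) : lsTilde L γ 0 = 0 := by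
  simp [lsTilde, hL]

lemma lsPhi_zero {L : ℕ} (S : ℕ) (hL : 0 < L) (γ : ℝ) : lsPhi L S γ 0 = 0 := by
  simp [lsPhi, lsDigit, lsTilde_zero hL]

lemma lsPhi_eq {L S : ℕ} (hL : 0 < L) (hS : 0 < S) (γ : ℝ) (n : ℕ) :
    lsPhi L S γ n
      = γ * (lsTilde L γ (n % (L + S)) + lsPhi L S γ (n / (L + S))) := by
  rcases lt_or_ge n (L + S) with h | h
  · rw [Nat.div_eq_of_lt h, lsPhi_zero S hL, lsPhi, Nat.log_of_lt h]
    simp [lsDigit_zero_right, mul_comm]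
  · rw [lsPhi, Nat.log_of_one_lt_of_le (by omega) h, Finset.sum_range_succ', lsPhi, mul_add,
      Finset.mul_sum, add_comm]
    congr 1
    · simp [lsDigit_zero_right, mul_comm]
    · refine Finset.sum_congr rfl fun k _ => ?_
      rw [lsDigit_succ]
      ring

lemma lsPhi_mul_add_of_lt {L S d : ℕ} (hS : 0 < S) (hd : d < L) (γ : ℝ) (q : ℕ) :
    lsPhi L S γ ((L + S) * q + d) = γ * (d + lsPhi L S γ q) := by
  have hb : 0 < L + S := by omega
  rw [lsPhi_eq (by omega) hS, Nat.mul_add_mod, Nat.mod_eq_of_lt (by omega), Nat.mul_add_div hb,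
    Nat.div_eq_of_lt (by omega)]
  simp [lsTilde, hd]

lemma lsPhi_mul_add_of_le {L S e : ℕ} (hL : 0 < L) (he : e < S) (γ : ℝ) (q : ℕ) :
    lsPhi L S γ ((L + S) * q + (L + e)) = γ * (L + γ * e + lsPhi L S γ q) := by
  have hb : 0 < L + S := by omega
  rw [lsPhi_eq hL (by omega), Nat.mul_add_mod, Nat.mod_eq_of_lt (by omega), Nat.mul_add_div hb,
    Nat.div_eq_of_lt (by omega)]
  simp [lsTilde]

lemma lsPhi_nonneg (L S : ℕ) {γ : ℝ} (hγ : 0 < γ) (n : ℕ) : 0 ≤ lsPhi L S γ n := by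
  refine Finset.sum_nonneg fun k _ => mul_nonneg ?_ (by positivity)
  unfold lsTilde
  split_ifs with h
  · positivity
  · have : (L : ℝ) ≤ (lsDigit (L + S) n k : ℝ) := by exact_mod_cast not_lt.1 h
    have := mul_nonneg hγ.le (sub_nonneg.2 this)
    positivity

lemma lsPhi_lt_one {L S : ℕ} (hL : 0 < L) (hS : 0 < S) {γ : ℝ} (hγ : 0 < γ)
    (hroot : (L : ℝ) * γ + (S : ℝ) * γ ^ 2 = 1) (n : ℕ) (hn : memNLS L S n) :
    lsPhi L S γ n < 1 := by
  induction n using Nat.strong_induction_on with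
  | _ n ih =>
    have hSpos : (0 : ℝ) < S := by exact_mod_cast hS
    have hb : 0 < L + S := by omega
    obtain ⟨q, d, hd, rfl⟩ : ∃ q d, d < L + S ∧ n = (L + S) * q + d :=
      ⟨n / (L + S), n % (L + S), Nat.mod_lt _ hb, (Nat.div_add_mod n (L + S)).symm⟩
    rcases lt_or_ge d L with h | h
    · rw [memNLS_mul_add_of_lt hS h] at hn
      rw [lsPhi_mul_add_of_lt hS h]
      have hq : lsPhi L S γ q < 1 := by
        rcases Nat.eq_zero_or_pos q with rfl | hq0
        · simp [lsPhi_zero S hL]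
        · exact ih q (by nlinarith) hn
      have hd1 : (d : ℝ) + 1 ≤ L := by exact_mod_cast h
      have : γ * (d + lsPhi L S γ q) < γ * L := mul_lt_mul_of_pos_left (by linarith) hγ
      nlinarith [mul_pos hSpos (pow_pos hγ 2)]
    · obtain ⟨e, rfl⟩ := Nat.exists_eq_add_of_le h
      have he : e < S := by omega
      rw [memNLS_mul_add_of_le hS he] at hn
      rw [lsPhi_mul_add_of_le hL he]
      obtain ⟨r, rfl⟩ := Nat.dvd_of_mod_eq_zero hn.1
      have hr := (memNLS_mul_add_of_lt (d := 0) hS hL r).1 hn.2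
      have hphi := lsPhi_mul_add_of_lt (d := 0) hS hL γ r
      simp only [add_zero, Nat.cast_zero, zero_add] at hphi
      have hq : lsPhi L S γ r < 1 := by
        rcases Nat.eq_zero_or_pos r with rfl | hr0
        · simp [lsPhi_zero S hL]
        · refine ih r ?_ hr
          have : r ≤ (L + S) * r := Nat.le_mul_of_pos_left r hb
          have : (L + S) * r ≤ (L + S) * ((L + S) * r) := Nat.le_mul_of_pos_left _ hb
          omega
      have he1 : (e : ℝ) + 1 ≤ S := by exact_mod_cast he
      rw [hphi]
      have : γ ^ 2 * (e + lsPhi L S γ r) < γ ^ 2 * S :=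
        mul_lt_mul_of_pos_left (by linarith) (by positivity)
      nlinarith

/-! ### Counting admissible integers whose image is below a threshold -/

open Classical in
/-- Indicator of the admissible integers `n` with `φ_{L,S}(n) < c`. -/
def lsInd (L S : ℕ) (γ c : ℝ) (n : ℕ) : ℝ :=
  if memNLS L S n ∧ lsPhi L S γ n < c then 1 else 0

/-- The number of admissible integers `n < X` with `φ_{L,S}(n) < c`. -/
def lsCount (L S : ℕ) (γ : ℝ) (X : ℕ) (c : ℝ) : ℝ :=
  ∑ n ∈ range X, lsInd L S γ c n

lemma lsInd_nonneg (L S : ℕ) (γ c : ℝ) (n : ℕ) : 0 ≤ lsInd L S γ c n := by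
  unfold lsInd
  split_ifs <;> norm_num

lemma lsInd_le_one (L S : ℕ) (γ c : ℝ) (n : ℕ) : lsInd L S γ c n ≤ 1 := by
  unfold lsInd
  split_ifs <;> norm_num

lemma lsInd_congr {L S n n' : ℕ} {γ c c' : ℝ}
    (h : memNLS L S n ∧ lsPhi L S γ n < c ↔ memNLS L S n' ∧ lsPhi L S γ n' < c') :
    lsInd L S γ c n = lsInd L S γ c' n' := by
  classical
  exact if_congr h rfl rfl

lemma lsInd_mul_add_of_lt {L S d : ℕ} (hS : 0 < S) (hd : d < L) {γ : ℝ} (hγ : 0 < γ)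
    (c : ℝ) (q : ℕ) :
    lsInd L S γ c ((L + S) * q + d) = lsInd L S γ (c / γ - d) q := by
  apply lsInd_congr
  rw [memNLS_mul_add_of_lt hS hd, lsPhi_mul_add_of_lt hS hd, lt_sub_iff_add_lt',
    lt_div_iff₀' hγ]

lemma lsInd_mul_mul_add_of_le {L S e : ℕ} (hL : 0 < L) (he : e < S) {γ : ℝ} (hγ : 0 < γ)
    (c : ℝ) (q : ℕ) :
    lsInd L S γ c ((L + S) * ((L + S) * q) + (L + e))
      = lsInd L S γ ((c / γ - L) / γ - e) q := by
  have hS : 0 < S := by omega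
  have hmem := memNLS_mul_add_of_lt (d := 0) hS hL q
  have hphi := lsPhi_mul_add_of_lt (d := 0) hS hL γ q
  simp only [add_zero, Nat.cast_zero, zero_add] at hmem hphi
  apply lsInd_congr
  rw [memNLS_mul_add_of_le hS he, lsPhi_mul_add_of_le hL he, hmem, hphi, lt_sub_iff_add_lt',
    lt_div_iff₀' hγ, lt_sub_iff_add_lt', lt_div_iff₀' hγ, mul_add γ (e : ℝ), add_assoc,
    Nat.mul_mod_right]
  simp only [true_and]

lemma lsInd_mul_add_of_mod_ne_zero {L S e q : ℕ} (he : e < S) (γ c : ℝ)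
    (hq : q % (L + S) ≠ 0) :
    lsInd L S γ c ((L + S) * q + (L + e)) = 0 := by
  unfold lsInd
  rw [memNLS_mul_add_of_le (by omega) he]
  simp [hq]

lemma sum_range_mul_eq (f : ℕ → ℝ) (b q : ℕ) :
    ∑ n ∈ range (b * q), f n = ∑ d ∈ range b, ∑ i ∈ range q, f (b * i + d) := by
  induction q with
  | zero => simp
  | succ q ih =>
    rw [mul_add_one, Finset.sum_range_add, ih, ← Finset.sum_add_distrib]
    simp only [Finset.sum_range_succ]

lemma sum_range_sub_digit_sum_mem_Icc {f : ℕ → ℝ} (hf0 : ∀ n, 0 ≤ f n) (hf1 : ∀ n, f n ≤ 1)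
    {b : ℕ} (hb : 0 < b) (X : ℕ) :
    ∑ n ∈ range X, f n - ∑ d ∈ range b, ∑ i ∈ range (X / b), f (b * i + d)
      ∈ Set.Icc (0 : ℝ) b := by
  have hX : ∑ n ∈ range X, f n
      = ∑ n ∈ range (b * (X / b)), f n + ∑ r ∈ range (X % b), f (b * (X / b) + r) := by
    rw [← Finset.sum_range_add, Nat.div_add_mod]
  rw [hX, sum_range_mul_eq, add_sub_cancel_left]
  refine ⟨Finset.sum_nonneg fun _ _ => hf0 _, ?_⟩
  calc ∑ r ∈ range (X % b), f (b * (X / b) + r) ≤ ∑ _r ∈ range (X % b), (1 : ℝ) :=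
        Finset.sum_le_sum fun _ _ => hf1 _
    _ = ((X % b : ℕ) : ℝ) := by simp
    _ ≤ b := by exact_mod_cast (Nat.mod_lt X hb).le

lemma lsCount_zero (L S : ℕ) (γ c : ℝ) : lsCount L S γ 0 c = 0 := by
  simp [lsCount]

lemma lsCount_nonneg (L S : ℕ) (γ : ℝ) (X : ℕ) (c : ℝ) : 0 ≤ lsCount L S γ X c :=
  Finset.sum_nonneg fun _ _ => lsInd_nonneg _ _ _ _ _

/-- Splitting off the last digit (or the last two, if the last one is at least `L`) expresses
the counting function at `X` through its values at `X / b` and `X / b²`, up to a bounded error. -/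
lemma lsCount_sub_mem_Icc {L S : ℕ} (hL : 0 < L) (hS : 0 < S) {γ : ℝ} (hγ : 0 < γ)
    (X : ℕ) (c : ℝ) :
    lsCount L S γ X c - (∑ d ∈ range L, lsCount L S γ (X / (L + S)) (c / γ - d)
      + ∑ e ∈ range S, lsCount L S γ (X / (L + S) / (L + S)) ((c / γ - L) / γ - e))
      ∈ Set.Icc (0 : ℝ) ((L + S : ℕ) + S * (L + S : ℕ)) := by
  have hb : 0 < L + S := by omega
  have h1 := sum_range_sub_digit_sum_mem_Icc (lsInd_nonneg L S γ c) (lsInd_le_one L S γ c) hb X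
  rw [Finset.sum_range_add] at h1
  have hlow : ∑ d ∈ range L, ∑ i ∈ range (X / (L + S)), lsInd L S γ c ((L + S) * i + d)
      = ∑ d ∈ range L, lsCount L S γ (X / (L + S)) (c / γ - d) :=
    Finset.sum_congr rfl fun d hd => Finset.sum_congr rfl fun i _ =>
      lsInd_mul_add_of_lt hS (Finset.mem_range.1 hd) hγ c i
  have hhigh : ∀ e ∈ range S,
      ∑ i ∈ range (X / (L + S)), lsInd L S γ c ((L + S) * i + (L + e))
        - lsCount L S γ (X / (L + S) / (L + S)) ((c / γ - L) / γ - e)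
        ∈ Set.Icc (0 : ℝ) (L + S : ℕ) := by
    intro e he
    have he' := Finset.mem_range.1 he
    have h2 := sum_range_sub_digit_sum_mem_Icc
      (f := fun i => lsInd L S γ c ((L + S) * i + (L + e)))
      (fun _ => lsInd_nonneg _ _ _ _ _) (fun _ => lsInd_le_one _ _ _ _ _) hb (X / (L + S))
    rw [Finset.sum_eq_single_of_mem (s := range (L + S)) 0 (by simpa using hb)] at h2
    · simpa only [add_zero, lsInd_mul_mul_add_of_le hL he' hγ, lsCount] using h2
    · intro d hd hd0
      refine Finset.sum_eq_zero fun i _ => lsInd_mul_add_of_mod_ne_zero he' γ c ?_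
      rwa [Nat.mul_add_mod, Nat.mod_eq_of_lt (Finset.mem_range.1 hd)]
  have hlo := Finset.sum_nonneg fun e he => (hhigh e he).1
  have hup := Finset.sum_le_sum fun e he => (hhigh e he).2
  rw [Finset.sum_sub_distrib] at hlo hup
  rw [hlow] at h1
  simp only [Finset.sum_const, Finset.card_range, nsmul_eq_mul] at hup
  unfold lsCount at h1 hlo hup ⊢
  exact ⟨by linarith [h1.1], by linarith [h1.2]⟩

lemma lsCount_of_nonpos (L S : ℕ) {γ : ℝ} (hγ : 0 < γ) (X : ℕ) {c : ℝ} (hc : c ≤ 0) :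
    lsCount L S γ X c = 0 :=
  Finset.sum_eq_zero fun n _ =>
    if_neg fun h => absurd (lsPhi_nonneg L S hγ n) (by linarith [h.2])

lemma lsCount_of_one_le {L S : ℕ} (hL : 0 < L) (hS : 0 < S) {γ : ℝ} (hγ : 0 < γ)
    (hroot : (L : ℝ) * γ + (S : ℝ) * γ ^ 2 = 1) (X : ℕ) {c : ℝ} (hc : 1 ≤ c) :
    lsCount L S γ X c = lsCount L S γ X 1 := by
  refine Finset.sum_congr rfl fun n _ => lsInd_congr (and_congr_right fun hn => ?_)
  have hlt := lsPhi_lt_one hL hS hγ hroot n hn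
  exact ⟨fun _ => hlt, fun _ => hlt.trans_le hc⟩

lemma lsCount_one_sub_mem_Icc {L S : ℕ} (hL : 0 < L) (hS : 0 < S) {γ : ℝ} (hγ : 0 < γ)
    (hroot : (L : ℝ) * γ + (S : ℝ) * γ ^ 2 = 1) (X : ℕ) :
    lsCount L S γ X 1 - (L * lsCount L S γ (X / (L + S)) 1
      + S * lsCount L S γ (X / (L + S) / (L + S)) 1)
      ∈ Set.Icc (0 : ℝ) ((L + S : ℕ) + S * (L + S : ℕ)) := by
  have hinv : 1 / γ = L + S * γ := by
    field_simp
    linarith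
  have hSγ : 0 ≤ S * γ := by positivity
  have h := lsCount_sub_mem_Icc hL hS hγ X 1
  have hlow : ∀ d ∈ range L, lsCount L S γ (X / (L + S)) (1 / γ - d)
      = lsCount L S γ (X / (L + S)) 1 := by
    intro d hd
    have : (d : ℝ) + 1 ≤ L := by exact_mod_cast Finset.mem_range.1 hd
    exact lsCount_of_one_le hL hS hγ hroot _ (by linarith)
  have hhigh : ∀ e ∈ range S, lsCount L S γ (X / (L + S) / (L + S)) ((1 / γ - L) / γ - e)
      = lsCount L S γ (X / (L + S) / (L + S)) 1 := by
    intro e he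
    have : (e : ℝ) + 1 ≤ S := by exact_mod_cast Finset.mem_range.1 he
    refine lsCount_of_one_le hL hS hγ hroot _ ?_
    rw [hinv, add_sub_cancel_left, mul_div_cancel_right₀ _ hγ.ne']
    linarith
  rw [Finset.sum_congr rfl hlow, Finset.sum_congr rfl hhigh] at h
  simpa using h

/-- Deleting the last digit scales the number of smaller admissible integers by `γ`, up to a
bounded error. This is where `S γ < 1` enters. -/
lemma abs_lsCount_div_sub_le {L S : ℕ} (hL : 0 < L) (hS : 0 < S) {γ : ℝ} (hγ : 0 < γ)
    (hroot : (L : ℝ) * γ + (S : ℝ) * γ ^ 2 = 1) (hSγ : S * γ < 1) (X : ℕ) :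
    |lsCount L S γ (X / (L + S)) 1 - γ * lsCount L S γ X 1|
      ≤ γ * ((L + S : ℕ) + S * (L + S : ℕ)) / (1 - S * γ) := by
  set E : ℝ := (L + S : ℕ) + S * (L + S : ℕ) with hE
  have hE0 : 0 ≤ E := by positivity
  have hden : 0 < 1 - S * γ := by linarith
  induction X using Nat.strong_induction_on with
  | _ X ih =>
    rcases Nat.eq_zero_or_pos X with rfl | hX
    · simp only [Nat.zero_div, lsCount_zero, mul_zero, sub_zero, abs_zero]
      positivity
    · have hprev := ih (X / (L + S)) (Nat.div_lt_self hX (by omega))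
      have hrec := lsCount_one_sub_mem_Icc hL hS hγ hroot X
      rw [← hE] at hrec
      set r₀ := lsCount L S γ X 1
      set r₁ := lsCount L S γ (X / (L + S)) 1
      set r₂ := lsCount L S γ (X / (L + S) / (L + S)) 1
      set C := γ * E / (1 - S * γ)
      have hCE : C = S * γ * C + γ * E := by
        have : C * (1 - S * γ) = γ * E := div_mul_cancel₀ _ hden.ne'
        linarith
      have hid : r₁ - γ * r₀
          = -(S * γ) * (r₂ - γ * r₁) - γ * (r₀ - (L * r₁ + S * r₂)) := by
        linear_combination (-r₁) * hroot
      have herr : |γ * (r₀ - (L * r₁ + S * r₂))| ≤ γ * E := by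
        rw [abs_mul, abs_of_pos hγ, abs_of_nonneg hrec.1]
        exact mul_le_mul_of_nonneg_left hrec.2 hγ.le
      have hmain : |-(S * γ) * (r₂ - γ * r₁)| ≤ S * γ * C := by
        rw [abs_mul, abs_neg, abs_of_nonneg (by positivity : (0 : ℝ) ≤ S * γ)]
        exact mul_le_mul_of_nonneg_left hprev (by positivity)
      rw [hid, hCE]
      exact (abs_sub _ _).trans (add_le_add hmain herr)

/-! ### The local discrepancy -/

/-- Truncation of a real number to `[0, 1]`. -/
def unitClamp (x : ℝ) : ℝ := max 0 (min x 1)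

lemma sum_unitClamp_sub (n : ℕ) (x : ℝ) :
    ∑ d ∈ range n, unitClamp (x - d) = max 0 (min x n) := by
  induction n with
  | zero => simp
  | succ n ih =>
    have hn : (0 : ℝ) ≤ n := n.cast_nonneg
    rw [Finset.sum_range_succ, ih, unitClamp]
    push_cast
    rcases le_total x n with h | h
    · rw [min_eq_left h, min_eq_left (by linarith : x ≤ n + 1),
        min_eq_left (by linarith : x - n ≤ 1), max_eq_left (by linarith : x - n ≤ 0), add_zero]
    · rw [min_eq_right h, max_eq_right hn,
        max_eq_right (le_min (by linarith) zero_le_one),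
        max_eq_right (le_min (by linarith) (by linarith))]
      rcases le_total x (n + 1) with h' | h'
      · rw [min_eq_left h', min_eq_left (by linarith)]
        ring
      · rw [min_eq_right h', min_eq_right (by linarith)]

lemma sum_shift_eq_zero_of_le {h : ℝ → ℝ} (h1 : ∀ x, 1 ≤ x → h x = 0) {n : ℕ} {x : ℝ}
    (hx : (n : ℝ) ≤ x) : ∑ d ∈ range n, h (x - d) = 0 := by
  refine Finset.sum_eq_zero fun d hd => h1 _ ?_
  have : (d : ℝ) + 1 ≤ n := by exact_mod_cast Finset.mem_range.1 hd
  linarith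

lemma abs_sum_shift_le {h : ℝ → ℝ} {B : ℝ} (hB : 0 ≤ B) (h0 : ∀ x ≤ 0, h x = 0)
    (h1 : ∀ x, 1 ≤ x → h x = 0) (hbd : ∀ x, |h x| ≤ B) (n : ℕ) (x : ℝ) :
    |∑ d ∈ range n, h (x - d)| ≤ B := by
  induction n with
  | zero => simpa using hB
  | succ n ih =>
    rw [Finset.sum_range_succ]
    rcases le_total (n : ℝ) x with hx | hx
    · rw [sum_shift_eq_zero_of_le h1 hx, zero_add]
      exact hbd _
    · rwa [h0 (x - n) (by linarith), add_zero]

/-- The deviation of the number of admissible `n < X` with `φ_{L,S}(n) < c` from its expected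
value. -/
def lsDev (L S : ℕ) (γ : ℝ) (X : ℕ) (c : ℝ) : ℝ :=
  lsCount L S γ X c - unitClamp c * lsCount L S γ X 1

lemma lsDev_of_nonpos (L S : ℕ) {γ : ℝ} (hγ : 0 < γ) (X : ℕ) {c : ℝ} (hc : c ≤ 0) :
    lsDev L S γ X c = 0 := by
  rw [lsDev, lsCount_of_nonpos L S hγ X hc, unitClamp, max_eq_left ((min_le_left _ _).trans hc)]
  ring

lemma lsDev_of_one_le {L S : ℕ} (hL : 0 < L) (hS : 0 < S) {γ : ℝ} (hγ : 0 < γ)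
    (hroot : (L : ℝ) * γ + (S : ℝ) * γ ^ 2 = 1) (X : ℕ) {c : ℝ} (hc : 1 ≤ c) :
    lsDev L S γ X c = 0 := by
  rw [lsDev, lsCount_of_one_le hL hS hγ hroot X hc, unitClamp, min_eq_right hc,
    max_eq_right zero_le_one]
  ring

lemma sum_lsCount_eq (L S : ℕ) (γ : ℝ) (X n : ℕ) (x : ℝ) :
    ∑ d ∈ range n, lsCount L S γ X (x - d)
      = ∑ d ∈ range n, lsDev L S γ X (x - d) + max 0 (min x n) * lsCount L S γ X 1 := by
  rw [← sum_unitClamp_sub, Finset.sum_mul, ← Finset.sum_add_distrib]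
  simp [lsDev]

/-- The deviation grows at most linearly in the number of digits of `X`. -/
lemma exists_abs_lsDev_le {L S : ℕ} (hL : 0 < L) (hS : 0 < S) {γ : ℝ} (hγ : 0 < γ)
    (hroot : (L : ℝ) * γ + (S : ℝ) * γ ^ 2 = 1) (hγ1 : γ < 1) (hSγ : S * γ < 1) :
    ∃ K : ℝ, 0 ≤ K ∧ ∀ k X : ℕ, X < (L + S) ^ k → ∀ c, |lsDev L S γ X c| ≤ K * k := by
  set E : ℝ := (L + S : ℕ) + S * (L + S : ℕ) with hE
  set C : ℝ := γ * E / (1 - S * γ) with hC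
  have hden : 0 < 1 - S * γ := by linarith
  have hC0 : 0 ≤ C := by positivity
  have hK : 0 ≤ E + L * C + S * (2 * C) := by positivity
  refine ⟨E + L * C + S * (2 * C), hK, fun k => ?_⟩
  induction k with
  | zero =>
    intro X hX c
    obtain rfl : X = 0 := by simpa using hX
    simp [lsDev, lsCount_zero]
  | succ k ih =>
    intro X hX c
    have hpos : 0 ≤ (E + L * C + S * (2 * C)) * ((k + 1 : ℕ) : ℝ) := by positivity
    rcases le_total c 0 with hc0 | hc0
    · rwa [lsDev_of_nonpos L S hγ X hc0, abs_zero]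
    rcases le_total 1 c with hc1 | hc1
    · rwa [lsDev_of_one_le hL hS hγ hroot X hc1, abs_zero]
    have hX1 : X / (L + S) < (L + S) ^ k := by
      rw [pow_succ] at hX
      exact Nat.div_lt_of_lt_mul (by rwa [mul_comm])
    have hX2 : X / (L + S) / (L + S) < (L + S) ^ k := (Nat.div_le_self _ _).trans_lt hX1
    set B := (E + L * C + S * (2 * C)) * (k : ℝ)
    have hB : 0 ≤ B := by positivity
    have hrec := lsCount_sub_mem_Icc hL hS hγ X c
    rw [sum_lsCount_eq, sum_lsCount_eq, ← hE] at hrec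
    have hR1 := abs_lsCount_div_sub_le hL hS hγ hroot hSγ X
    have hR2 := abs_lsCount_div_sub_le hL hS hγ hroot hSγ (X / (L + S))
    rw [← hE, ← hC] at hR1 hR2
    set x := c / γ with hx
    set y := (x - L) / γ with hy
    have hxγ : γ * x = c := mul_div_cancel₀ _ hγ.ne'
    have hyγ : γ * y = x - L := mul_div_cancel₀ _ hγ.ne'
    set s₁ := ∑ d ∈ range L, lsDev L S γ (X / (L + S)) (x - d) with hs₁
    set s₂ := ∑ e ∈ range S, lsDev L S γ (X / (L + S) / (L + S)) (y - e) with hs₂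
    set P := max 0 (min x (L : ℝ)) with hP
    set Q := max 0 (min y (S : ℝ)) with hQ
    have hP0 : 0 ≤ P := le_max_left _ _
    have hQ0 : 0 ≤ Q := le_max_left _ _
    have hPL : P ≤ L := max_le (Nat.cast_nonneg _) (min_le_right _ _)
    have hQS : Q ≤ S := max_le (Nat.cast_nonneg _) (min_le_right _ _)
    have hx0 : 0 ≤ x := by positivity
    have hs : |s₁ + s₂| ≤ B ∧ c = γ * P + γ ^ 2 * Q := by
      rcases le_total x L with hxL | hxL
      · have hy0 : y ≤ 0 := div_nonpos_of_nonpos_of_nonneg (by linarith) hγ.le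
        have hs₂0 : s₂ = 0 := Finset.sum_eq_zero fun e _ =>
          lsDev_of_nonpos L S hγ _ (by linarith [(Nat.cast_nonneg e : (0 : ℝ) ≤ e)])
        refine ⟨?_, ?_⟩
        · rw [hs₂0, add_zero]
          exact abs_sum_shift_le hB (fun _ => lsDev_of_nonpos L S hγ _)
            (fun _ => lsDev_of_one_le hL hS hγ hroot _) (ih _ hX1) L x
        · rw [hP, hQ, min_eq_left hxL, max_eq_right hx0,
            max_eq_left ((min_le_left _ _).trans hy0), ← hxγ]
          ring
      · have hs₁0 : s₁ = 0 :=
          sum_shift_eq_zero_of_le (fun _ => lsDev_of_one_le hL hS hγ hroot _) hxL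
        have hy0 : 0 ≤ y := div_nonneg (by linarith) hγ.le
        have hyS : y ≤ S := by
          by_contra! hlt
          nlinarith [mul_lt_mul_of_pos_left hlt (pow_pos hγ 2)]
        refine ⟨?_, ?_⟩
        · rw [hs₁0, zero_add]
          exact abs_sum_shift_le hB (fun _ => lsDev_of_nonpos L S hγ _)
            (fun _ => lsDev_of_one_le hL hS hγ hroot _) (ih _ hX2) S y
        · rw [hP, hQ, min_eq_right hxL, max_eq_right (Nat.cast_nonneg _), min_eq_left hyS,
            max_eq_right hy0]
          linear_combination -γ * hyγ - hxγ
    have hclamp : unitClamp c = c := by rw [unitClamp, min_eq_left hc1, max_eq_right hc0]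
    rw [lsDev, hclamp]
    set A := lsCount L S γ X c
    set r₀ := lsCount L S γ X 1
    set r₁ := lsCount L S γ (X / (L + S)) 1
    set r₂ := lsCount L S γ (X / (L + S) / (L + S)) 1
    have hid : A - c * r₀ = (A - (s₁ + P * r₁ + (s₂ + Q * r₂))) + (s₁ + s₂)
        + P * (r₁ - γ * r₀) + Q * ((r₂ - γ * r₁) + γ * (r₁ - γ * r₀)) := by
      linear_combination (-r₀) * hs.2
    have hPb : |P * (r₁ - γ * r₀)| ≤ L * C := by
      rw [abs_mul, abs_of_nonneg hP0]
      exact mul_le_mul hPL hR1 (abs_nonneg _) (Nat.cast_nonneg _)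
    have hQb : |Q * ((r₂ - γ * r₁) + γ * (r₁ - γ * r₀))| ≤ S * (2 * C) := by
      rw [abs_mul, abs_of_nonneg hQ0]
      refine mul_le_mul hQS ((abs_add_le _ _).trans ?_) (abs_nonneg _) (Nat.cast_nonneg _)
      rw [abs_mul γ, abs_of_pos hγ]
      nlinarith [abs_nonneg (r₁ - γ * r₀)]
    have hEb : |A - (s₁ + P * r₁ + (s₂ + Q * r₂))| ≤ E := by
      rw [abs_of_nonneg hrec.1]
      exact hrec.2
    have hBsucc : (E + L * C + S * (2 * C)) * ((k + 1 : ℕ) : ℝ)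
        = E + B + L * C + S * (2 * C) := by
      push_cast
      ring
    rw [hid, hBsucc]
    refine (abs_add_le _ _).trans (add_le_add ((abs_add_le _ _).trans (add_le_add
      ((abs_add_le _ _).trans (add_le_add hEb hs.1)) hPb)) hQb)

/-! ### Passing to the enumeration of the admissible integers -/

open Classical in
lemma sum_range_ite_eq_sum_nth (p : ℕ → Prop) (g : ℕ → ℝ) (X : ℕ) :
    ∑ n ∈ range X, (if p n then g n else 0) = ∑ i ∈ range (Nat.count p X), g (Nat.nth p i) := by
  induction X with
  | zero => simp
  | succ X ih =>
    rw [Finset.sum_range_succ, ih, Nat.count_succ]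
    split_ifs with h
    · rw [Finset.sum_range_succ, Nat.nth_count h]
    · simp

open Classical in
lemma lsCount_eq_sum_nth (L S : ℕ) (γ : ℝ) (X : ℕ) (c : ℝ) :
    lsCount L S γ X c = ∑ i ∈ range (Nat.count (memNLS L S) X),
      (if lsPhi L S γ (Nat.nth (memNLS L S) i) < c then (1 : ℝ) else 0) := by
  rw [← sum_range_ite_eq_sum_nth (memNLS L S) fun n => if lsPhi L S γ n < c then (1 : ℝ) else 0]
  simp only [lsCount, lsInd, ite_and]

open Classical in
lemma lsCount_nth {L S : ℕ} (hL : 0 < L) (hS : 0 < S) (γ : ℝ) (m : ℕ) (c : ℝ) :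
    lsCount L S γ (Nat.nth (memNLS L S) m) c
      = ∑ i ∈ range m, (if lsPhi L S γ (Nat.nth (memNLS L S) i) < c then (1 : ℝ) else 0) := by
  rw [lsCount_eq_sum_nth, Nat.count_nth_of_infinite (infinite_memNLS hL hS)]

open Classical in
lemma lsCount_one_eq_count {L S : ℕ} (hL : 0 < L) (hS : 0 < S) {γ : ℝ} (hγ : 0 < γ)
    (hroot : (L : ℝ) * γ + (S : ℝ) * γ ^ 2 = 1) (X : ℕ) :
    lsCount L S γ X 1 = Nat.count (memNLS L S) X := by
  rw [lsCount_eq_sum_nth, Finset.sum_congr rfl fun i _ => if_pos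
    (lsPhi_lt_one hL hS hγ hroot _ (Nat.nth_mem_of_infinite (infinite_memNLS hL hS) i))]
  simp

lemma two_pow_le_lsCount {L S : ℕ} (hL : 0 < L) (hS : 0 < S) {γ : ℝ} (hγ : 0 < γ)
    (hroot : (L : ℝ) * γ + (S : ℝ) * γ ^ 2 = 1) (k : ℕ) :
    (2 : ℝ) ^ k ≤ lsCount L S γ ((L + S) ^ (2 * k)) 1
      ∧ (2 : ℝ) ^ k ≤ lsCount L S γ ((L + S) ^ (2 * k + 1)) 1 := by
  have hb : 0 < L + S := by omega
  have hL1 : (1 : ℝ) ≤ L := by exact_mod_cast hL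
  have hS1 : (1 : ℝ) ≤ S := by exact_mod_cast hS
  have hstep : ∀ j, lsCount L S γ ((L + S) ^ (j + 1)) 1 + lsCount L S γ ((L + S) ^ j) 1
      ≤ lsCount L S γ ((L + S) ^ (j + 2)) 1 := by
    intro j
    have h := (lsCount_one_sub_mem_Icc hL hS hγ hroot ((L + S) ^ (j + 2))).1
    rw [pow_succ _ (j + 1), Nat.mul_div_cancel _ hb, pow_succ _ j, Nat.mul_div_cancel _ hb] at h
    rw [pow_succ _ (j + 1), pow_succ _ j]
    have h1 := le_mul_of_one_le_left (lsCount_nonneg L S γ ((L + S) ^ j * (L + S)) 1) hL1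
    have h2 := le_mul_of_one_le_left (lsCount_nonneg L S γ ((L + S) ^ j) 1) hS1
    linarith
  have hone : lsCount L S γ 1 1 = 1 := by
    rw [lsCount, Finset.sum_range_one, lsInd, if_pos]
    exact ⟨memNLS_zero L S, by simp [lsPhi_zero S hL]⟩
  induction k with
  | zero =>
    have h := (lsCount_one_sub_mem_Icc hL hS hγ hroot (L + S)).1
    rw [Nat.div_self hb, hone] at h
    have h2 := mul_nonneg S.cast_nonneg (lsCount_nonneg L S γ (1 / (L + S)) 1)
    simp only [mul_zero, pow_zero, zero_add, pow_one, hone]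
    exact ⟨le_rfl, by linarith⟩
  | succ k ih =>
    obtain ⟨ih0, ih1⟩ := ih
    have h2 := hstep (2 * k)
    have h3 := hstep (2 * k + 1)
    rw [show 2 * k + 1 + 1 = 2 * k + 2 from rfl] at h3
    rw [show 2 * (k + 1) = 2 * k + 2 by ring, pow_succ (2 : ℝ) k]
    have hpos : (0 : ℝ) < 2 ^ k := by positivity
    exact ⟨by linarith, by
      rw [show 2 * k + 2 + 1 = 2 * k + 1 + 2 by ring]
      linarith⟩

open Classical in
lemma nth_memNLS_lt {L S : ℕ} (hL : 0 < L) (hS : 0 < S) {γ : ℝ} (hγ : 0 < γ)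
    (hroot : (L : ℝ) * γ + (S : ℝ) * γ ^ 2 = 1) {m k : ℕ} (hm : m < 2 ^ k) :
    Nat.nth (memNLS L S) m < (L + S) ^ (2 * k) := by
  refine Nat.nth_lt_of_lt_count (hm.trans_le ?_)
  have h := (two_pow_le_lsCount hL hS hγ hroot k).1
  rw [lsCount_one_eq_count hL hS hγ hroot] at h
  exact_mod_cast h

open Classical in
/-- Counting the points of the van der Corput type set in an anchored box. -/
lemma sum_indicator_eq_lsCount {L S : ℕ} (hL : 0 < L) (hS : 0 < S) {γ : ℝ} (hγ : 0 < γ)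
    {N : ℕ} (hN : 0 < N) {a : ℝ} (ha1 : a ≤ 1) (c : ℝ) :
    ∑ j ∈ Finset.Icc 1 N,
        Set.indicator (Set.Ico (0 : ℝ) a) (fun _ => (1 : ℝ)) (((j : ℝ) - 1) / N) *
        Set.indicator (Set.Ico (0 : ℝ) c) (fun _ => (1 : ℝ)) (lsSeq L S γ j)
      = lsCount L S γ (Nat.nth (memNLS L S) ⌈a * N⌉₊) c := by
  have hNpos : (0 : ℝ) < N := by exact_mod_cast hN
  have hle : ⌈a * N⌉₊ ≤ N := Nat.ceil_le.2 (by nlinarith)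
  have hfilter : (range N).filter (fun i => i < ⌈a * N⌉₊) = range ⌈a * N⌉₊ := by
    ext i
    simp only [Finset.mem_filter, Finset.mem_range]
    omega
  rw [lsCount_nth hL hS, ← hfilter, Finset.sum_filter, Finset.range_eq_Ico,
    Finset.sum_Ico_eq_sum_range, ← Finset.Ico_add_one_right_eq_Icc, Finset.sum_Ico_eq_sum_range]
  refine Finset.sum_congr (by simp) fun i _ => ?_
  have h1 : (((1 + i : ℕ) : ℝ) - 1) / N ∈ Set.Ico 0 a ↔ 0 + i < ⌈a * N⌉₊ := by
    rw [Nat.lt_ceil, Set.mem_Ico, div_lt_iff₀ hNpos]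
    push_cast
    rw [add_sub_cancel_left, zero_add]
    exact and_iff_right (by positivity)
  have h2 : lsSeq L S γ (1 + i) ∈ Set.Ico 0 c
      ↔ lsPhi L S γ (Nat.nth (memNLS L S) (0 + i)) < c := by
    rw [lsSeq, Nat.add_sub_cancel_left, zero_add, Set.mem_Ico]
    exact and_iff_right (lsPhi_nonneg L S hγ _)
  simp only [Set.indicator_apply, h1, h2]
  split_ifs <;> simp

/-- If `S ≤ L`, the `(L,S)`-point set à la van der Corput
`P_{L,S}(N) = {((n−1)/N, ξⁿ) : n = 1,…,N}` satisfies
`N · D₂(P_{L,S}(N)) ≤ C₁ log N` for all `N ≥ 2`. -/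
theorem ls_vdc_discrepancy_SleL (L S : ℕ) (hL : 0 < L) (hS : 0 < S) (hSL : S ≤ L)
    (γ : ℝ) (hγ0 : 0 < γ) (hγ1 : γ < 1)
    (hroot : (L : ℝ) * γ + (S : ℝ) * γ ^ 2 = 1) :
    ∃ C₁ : ℝ, 0 < C₁ ∧ ∀ N : ℕ, 2 ≤ N →
      (N : ℝ) * discrep2 (fun n => (((n : ℝ) - 1) / N, lsSeq L S γ n)) N
        ≤ C₁ * Real.log N := by
  have hSγ : S * γ < 1 := by
    have hSL' : (S : ℝ) ≤ L := by exact_mod_cast hSL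
    have hSpos : (0 : ℝ) < S := by exact_mod_cast hS
    nlinarith [mul_le_mul_of_nonneg_right hSL' hγ0.le, mul_pos hSpos (pow_pos hγ0 2)]
  obtain ⟨K, hK0, hK⟩ := exists_abs_lsDev_le hL hS hγ0 hroot hγ1 hSγ
  have hlog2 : 0 < Real.log 2 := Real.log_pos one_lt_two
  refine ⟨(4 * K + 1) / Real.log 2, by positivity, fun N hN => ?_⟩
  have hNpos : (0 : ℝ) < N := by exact_mod_cast (by omega : 0 < N)
  have hlogN : Real.log 2 ≤ Real.log N := Real.log_le_log two_pos (by exact_mod_cast hN)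
  have hlog : (Nat.log 2 N : ℝ) * Real.log 2 ≤ Real.log N := by
    rw [← Real.log_pow]
    exact Real.log_le_log (by positivity) (by exact_mod_cast Nat.pow_log_le_self 2 (by omega))
  rw [← le_div_iff₀' hNpos, discrep2]
  have : Nonempty {p : ℝ × ℝ // 0 < p.1 ∧ p.1 ≤ 1 ∧ 0 < p.2 ∧ p.2 ≤ 1} :=
    ⟨⟨(1, 1), by norm_num⟩⟩
  refine ciSup_le ?_
  rintro ⟨⟨a, c⟩, ha0, ha1, hc0, hc1⟩
  dsimp only at ha0 ha1 hc0 hc1 ⊢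
  rw [sum_indicator_eq_lsCount hL hS hγ0 (by omega) ha1, le_div_iff₀ hNpos,
    ← abs_of_pos hNpos, ← abs_mul, abs_of_pos hNpos, sub_mul, div_mul_cancel₀ _ hNpos.ne']
  set m := ⌈a * N⌉₊
  have hmN : m ≤ N := Nat.ceil_le.2 (by nlinarith)
  have hm : |(m : ℝ) - a * N| ≤ 1 := by
    rw [abs_le]
    have h1 : a * N ≤ m := Nat.le_ceil _
    have h2 : (m : ℝ) < a * N + 1 := Nat.ceil_lt_add_one (by positivity)
    exact ⟨by linarith, by linarith⟩
  have hdev := hK (2 * (Nat.log 2 N + 1)) (Nat.nth (memNLS L S) m)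
    (nth_memNLS_lt hL hS hγ0 hroot (hmN.trans_lt (Nat.lt_pow_succ_log_self one_lt_two N))) c
  rw [lsDev, unitClamp, min_eq_left hc1, max_eq_right hc0.le] at hdev
  classical
  rw [lsCount_one_eq_count hL hS hγ0 hroot, Nat.count_nth_of_infinite (infinite_memNLS hL hS)]
    at hdev
  set A := lsCount L S γ (Nat.nth (memNLS L S) m) c
  have hround : |c * ((m : ℝ) - a * N)| ≤ 1 := by
    rw [abs_mul, abs_of_pos hc0]
    exact mul_le_one₀ hc1 (abs_nonneg _) hm
  have hsum : |A - a * c * N| ≤ K * ((2 * (Nat.log 2 N + 1) : ℕ) : ℝ) + 1 := by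
    rw [show A - a * c * N = (A - c * m) + c * ((m : ℝ) - a * N) by ring]
    exact (abs_add_le _ _).trans (add_le_add hdev hround)
  refine hsum.trans ?_
  rw [div_mul_eq_mul_div, le_div_iff₀ hlog2]
  push_cast
  nlinarith [mul_le_mul_of_nonneg_left hlog hK0, mul_le_mul_of_nonneg_left hlogN hK0]
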